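/- arXiv:2301.07472 — 3 statements merged into one kernel-verified Lean document; each statement's English description precedes it below -/
import Mathlib

section
/- There exists a real constant c > 0 such that for every natural number k ≥ 2 there exists a natural number k' with 2^k ≤ k'! and k' ≤ c·k/log₂(k). (The quantitative core of Theorem 'Treewidth-Awareness': the smallest k' whose factorial exceeds 2^k is in O(k/log k).) -/
/-!
With `m = ⌊√x⌋`, each of the `n` factors of `(m + n)!` beyond `m!` exceeds `√x`, so
`(m + n)! ≥ √x ^ n`, which is at least `b ^ x` as soon as `n ≥ 2 * x / logb b x`. The extra `m ≤ √x`
and the rounding of `n` are absorbed because `√x + 1 = O(x / log x)`.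
-/

open scoped Nat

theorem pow_le_factorial_floor_add {y : ℝ} (hy : 0 ≤ y) (n : ℕ) :
    y ^ n ≤ ((⌊y⌋₊ + n)! : ℝ) :=
  calc y ^ n ≤ ((⌊y⌋₊ : ℝ) + 1) ^ n := by gcongr; exact (Nat.lt_floor_add_one y).le
    _ ≤ (⌊y⌋₊ ! : ℝ) * ((⌊y⌋₊ : ℝ) + 1) ^ n :=
      le_mul_of_one_le_left (by positivity) (mod_cast Nat.factorial_pos _)
    _ ≤ ((⌊y⌋₊ + n)! : ℝ) := mod_cast Nat.factorial_mul_pow_le_factorial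

theorem sqrt_add_one_mul_log_le {x : ℝ} (hx : 0 < x) : (√x + 1) * Real.log x ≤ 2 * (x - 1) :=
  calc (√x + 1) * Real.log x = 2 * ((√x + 1) * Real.log √x) := by rw [Real.log_sqrt hx.le]; ring
    _ ≤ 2 * ((√x + 1) * (√x - 1)) := by
      gcongr
      exact Real.log_le_sub_one_of_pos (Real.sqrt_pos.2 hx)
    _ = 2 * (x - 1) := by rw [← sq_sub_sq, Real.sq_sqrt hx.le, one_pow]

theorem sqrt_add_one_le_div_logb {b x : ℝ} (hb : 1 < b) (hx : 1 < x) :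
    √x + 1 ≤ 2 / Real.log b * x / Real.logb b x := by
  have hlogb : 0 < Real.log b := Real.log_pos hb
  have hlogx : 0 < Real.log x := Real.log_pos hx
  calc √x + 1 ≤ 2 * x / Real.log x := by
        rw [le_div_iff₀ hlogx]
        linarith [sqrt_add_one_mul_log_le (zero_lt_one.trans hx)]
    _ = 2 / Real.log b * x / Real.logb b x := by rw [Real.logb]; field_simp

theorem rpow_le_sqrt_pow_iff {b x z : ℝ} {n : ℕ} (hb : 1 < b) (hx : 0 < x) :
    b ^ z ≤ √x ^ n ↔ 2 * z ≤ n * Real.logb b x := by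
  have logb_sqrt : Real.logb b √x = Real.logb b x / 2 := by
    rw [Real.logb, Real.log_sqrt hx.le, Real.logb, div_right_comm]
  rw [← Real.le_logb_iff_rpow_le hb (pow_pos (Real.sqrt_pos.2 hx) n), Real.logb_pow, logb_sqrt,
    ← mul_div_assoc, le_div_iff₀' two_pos]

theorem exists_small_kprime_factorial_ge_two_pow_general {b x : ℝ} (hb : 1 < b) (hx : 1 < x) :
    ∃ m : ℕ, b ^ x ≤ (m ! : ℝ) ∧ (m : ℝ) ≤ (2 + 2 / Real.log b) * x / Real.logb b x := by
  have hlogb : 0 < Real.logb b x := Real.logb_pos hb hx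
  set n := ⌈2 * x / Real.logb b x⌉₊
  refine ⟨⌊√x⌋₊ + n, ?_, ?_⟩
  · have two_mul_le : 2 * x ≤ n * Real.logb b x := (div_le_iff₀ hlogb).1 (Nat.le_ceil _)
    exact ((rpow_le_sqrt_pow_iff hb (by linarith)).2 two_mul_le).trans
      (pow_le_factorial_floor_add x.sqrt_nonneg n)
  · calc ((⌊√x⌋₊ + n : ℕ) : ℝ) = ⌊√x⌋₊ + n := Nat.cast_add _ _
      _ ≤ √x + (2 * x / Real.logb b x + 1) :=
        add_le_add (Nat.floor_le x.sqrt_nonneg) (Nat.ceil_lt_add_one (by positivity)).le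
      _ = 2 * x / Real.logb b x + (√x + 1) := by ring
      _ ≤ 2 * x / Real.logb b x + 2 / Real.log b * x / Real.logb b x := by
        gcongr
        exact sqrt_add_one_le_div_logb hb hx
      _ = (2 + 2 / Real.log b) * x / Real.logb b x := by ring

/-- Quantitative core of Theorem "Treewidth-Awareness": there is a constant `c > 0`
such that for every `k ≥ 2` there is `k'` with `2^k ≤ k'!` and `k' ≤ c·k/log₂ k`. -/
theorem exists_small_kprime_factorial_ge_two_pow :
    ∃ c : ℝ, 0 < c ∧ ∀ k : ℕ, 2 ≤ k → ∃ k' : ℕ,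
      2 ^ k ≤ Nat.factorial k' ∧ (k' : ℝ) ≤ c * (k : ℝ) / Real.logb 2 (k : ℝ) :=
  ⟨2 + 2 / Real.log 2, by positivity, fun k hk => mod_cast
    exists_small_kprime_factorial_ge_two_pow_general one_lt_two (Nat.one_lt_cast.2 hk)⟩
end

section
/- There exists a real constant c > 0 such that for every natural number k ≥ 2 there exists a natural number k' with k' ≤ c·k/log₂(k) and an injective function from (Fin k → Bool) into Equiv.Perm (Fin k'). (Combinatorial core of the paper's Theorem 'Treewidth-Awareness': all 2^k assignments over a bag of k variables can be encoded injectively by orderings of only O(k/log k) ordering vertices.) -/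
/-!
There are `m!` permutations of `m` points and `2 ^ k` assignments, so the task is to find
`m = O(k / log k)` with `2 ^ k ≤ m!`. Take `m = ⌈2k / log k⌉` (natural logarithm). From
`e log √k ≤ √k` we get `e √k ≤ 2k / log k ≤ m`, so the Stirling-type bound `(m / e) ^ m ≤ m!`
yields `m! ≥ (√k) ^ m = exp (m log k / 2) ≥ exp k ≥ 2 ^ k`.
-/

open Real
open scoped Nat

theorem exp_one_mul_log_le_self {x : ℝ} (hx : 0 < x) : exp 1 * log x ≤ x := by
  simpa only [exp_log hx] using exp_one_mul_le_exp (x := log x)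

theorem exp_one_mul_sqrt_le_two_mul_div_log {x : ℝ} (hx : 1 < x) :
    exp 1 * √x ≤ 2 * x / log x := by
  have hx₀ : 0 < x := one_pos.trans hx
  rw [le_div_iff₀ (log_pos hx)]
  calc exp 1 * √x * log x = 2 * (√x * (exp 1 * log √x)) := by rw [log_sqrt hx₀.le]; ring
    _ ≤ 2 * (√x * √x) := by gcongr; exact exp_one_mul_log_le_self (sqrt_pos.2 hx₀)
    _ = 2 * x := by rw [mul_self_sqrt hx₀.le]

theorem pow_le_factorial_of_exp_one_mul_le {y : ℝ} {m : ℕ} (hy : 0 ≤ y) (hym : exp 1 * y ≤ m) :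
    y ^ m ≤ m ! := by
  refine le_of_mul_le_mul_left ?_ (exp_pos m)
  calc exp m * y ^ m = (exp 1 * y) ^ m := by rw [mul_pow, exp_one_pow]
    _ ≤ (m : ℝ) ^ m := by gcongr
    _ ≤ exp m * m ! := by
      rw [← div_le_iff₀ (by positivity)]
      exact pow_div_factorial_le_exp (m : ℝ) m.cast_nonneg m

theorem exp_le_factorial_of_two_mul_div_log_le {x : ℝ} {m : ℕ} (hx : 1 < x)
    (hm : 2 * x / log x ≤ m) : exp x ≤ m ! := by
  have hx₀ : 0 < x := one_pos.trans hx
  have hx_le : x ≤ m * log √x := by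
    rw [div_le_iff₀ (log_pos hx)] at hm
    rw [log_sqrt hx₀.le]
    linarith
  calc exp x ≤ exp (m * log √x) := exp_le_exp.2 hx_le
    _ = √x ^ m := by rw [exp_nat_mul, exp_log (sqrt_pos.2 hx₀)]
    _ ≤ m ! := pow_le_factorial_of_exp_one_mul_le (sqrt_nonneg x)
      ((exp_one_mul_sqrt_le_two_mul_div_log hx).trans hm)

theorem natCeil_two_mul_div_log_le {x : ℝ} (hx : 1 < x) :
    (⌈2 * x / log x⌉₊ : ℝ) ≤ 3 * x / log x := by
  have hx₀ : 0 < x := one_pos.trans hx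
  have hlog : 0 < log x := log_pos hx
  calc (⌈2 * x / log x⌉₊ : ℝ) ≤ 2 * x / log x + 1 := (Nat.ceil_lt_add_one (by positivity)).le
    _ ≤ 2 * x / log x + x / log x := by gcongr; exact (one_le_div hlog).2 (log_le_self hx₀.le)
    _ = 3 * x / log x := by ring

theorem two_pow_le_exp (k : ℕ) : (2 : ℝ) ^ k ≤ exp k := by
  rw [← exp_one_pow]
  gcongr
  exact exp_one_gt_two.le

theorem nonempty_bool_fun_embedding_perm_iff {ι α : Type*} [Fintype ι] [Fintype α] :
    Nonempty ((ι → Bool) ↪ Equiv.Perm α) ↔ 2 ^ Fintype.card ι ≤ (Fintype.card α)! := by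
  classical
  rw [Function.Embedding.nonempty_iff_card_le, Fintype.card_fun, Fintype.card_bool,
    Fintype.card_perm]

/-- Combinatorial core of "Treewidth-Awareness": there is `c > 0` such that for every
`k ≥ 2` there is `k' ≤ c·k/log₂ k` and an injection of the `2^k` assignments over
`k` variables into the permutations of `Fin k'`. -/
theorem exists_small_kprime_with_injection :
    ∃ c : ℝ, 0 < c ∧ ∀ k : ℕ, 2 ≤ k → ∃ k' : ℕ,
      (k' : ℝ) ≤ c * (k : ℝ) / Real.logb 2 (k : ℝ) ∧
      ∃ f : (Fin k → Bool) → Equiv.Perm (Fin k'), Function.Injective f := by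
  refine ⟨3 / log 2, by positivity, fun k hk => ⟨⌈2 * k / log k⌉₊, ?_, ?_⟩⟩
  all_goals have hk₁ : (1 : ℝ) < k := by exact_mod_cast hk
  · calc (⌈2 * k / log k⌉₊ : ℝ) ≤ 3 * k / log k := natCeil_two_mul_div_log_le hk₁
      _ = 3 / log 2 * k / logb 2 k := by rw [logb]; field_simp
  · have hcard : 2 ^ k ≤ ⌈2 * k / log k⌉₊ ! := by
      exact_mod_cast (two_pow_le_exp k).trans
        (exp_le_factorial_of_two_mul_div_log_le hk₁ (Nat.le_ceil _))
    obtain ⟨f⟩ : Nonempty ((Fin k → Bool) ↪ Equiv.Perm (Fin ⌈2 * k / log k⌉₊)) :=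
      nonempty_bool_fun_embedding_perm_iff.2 (by simpa only [Fintype.card_fin] using hcard)
    exact ⟨f, f.injective⟩
end

section
/- There exists a real constant c > 0 such that for all natural numbers ι and k with ι ≥ 2 and ι·log₂(ι) ≤ k, there exists a natural number m ≥ 1 with 2^k ≤ (ι!)^m and m·ι ≤ c·k/log₂(ι). (Quantitative core of the paper's Theorem 'Treewidth-Awareness of 𝓡'': using blocks of ι-element orderings, treewidth k can be decreased to k' = m·ι ∈ O(k/log ι).) -/
/-! Pairing the factors `i + 1` and `ι - i` of `ι! * ι!`, each pair having product at least `ι`,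
gives `ι ^ ι ≤ ι! ^ 2`, that is `ι * log₂ ι ≤ 2 * log₂ ι!`. The least `m` with `2 ^ k ≤ ι! ^ m` is
`⌈k / log₂ ι!⌉ ≤ k / log₂ ι! + 1`. After multiplication by `ι * log₂ ι`, the first summand is at
most `2 * k` by this bound, and the second, which is the cost of rounding up, is at most `k` because
`ι * log₂ ι ≤ k`. This gives `c = 3`. -/

theorem pow_self_le_factorial_sq (n : ℕ) : n ^ n ≤ n.factorial ^ 2 := by
  have le_mul (i : ℕ) (hi : i ∈ Finset.range n) : n ≤ (i + 1) * (n - i) := by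
    obtain ⟨d, rfl⟩ := Nat.exists_eq_add_of_lt (Finset.mem_range.mp hi)
    rw [show i + d + 1 - i = d + 1 by lia]
    lia
  calc
    n ^ n = ∏ _i ∈ Finset.range n, n := by rw [Finset.prod_const, Finset.card_range]
    _ ≤ ∏ i ∈ Finset.range n, (i + 1) * (n - i) := Finset.prod_le_prod' le_mul
    _ = n.factorial ^ 2 := by
      rw [Finset.prod_mul_distrib, Finset.prod_range_add_one_eq_factorial,
        ← Nat.descFactorial_eq_prod_range, Nat.descFactorial_self, sq]

theorem mul_logb_self_le_two_mul_logb_factorial {b : ℝ} (hb : 1 < b) (n : ℕ) :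
    n * Real.logb b n ≤ 2 * Real.logb b n.factorial := by
  have pow_self_le : (n : ℝ) ^ n ≤ (n.factorial : ℝ) ^ 2 := mod_cast pow_self_le_factorial_sq n
  have pow_self_pos : (0 : ℝ) < (n : ℝ) ^ n := mod_cast Nat.pow_self_pos
  simpa only [Real.logb_pow, Nat.cast_ofNat] using
    Real.logb_le_logb_of_le hb pow_self_pos pow_self_le

theorem pow_le_pow_ceil_div_logb {b x : ℝ} (hb : 1 < b) (hx : 1 < x) (k : ℕ) :
    b ^ k ≤ x ^ ⌈k / Real.logb b x⌉₊ := by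
  have logb_pos : 0 < Real.logb b x := Real.logb_pos hb hx
  rw [← Real.logb_le_logb hb (by positivity) (by positivity), Real.logb_pow, Real.logb_pow,
    Real.logb_self_eq_one hb, mul_one, ← div_le_iff₀ logb_pos]
  exact Nat.le_ceil _

theorem natCeil_div_mul_le_add_one_mul {K : Type*} [Field K] [LinearOrder K] [IsStrictOrderedRing K]
    [FloorSemiring K] {a b c y : K} (hb : 0 < b) (hy : 0 ≤ y) (hya : y ≤ a) (hyb : y ≤ c * b) :
    ⌈a / b⌉₊ * y ≤ (c + 1) * a := by
  have ha : 0 ≤ a := hy.trans hya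
  calc
    ⌈a / b⌉₊ * y ≤ (a / b + 1) * y := by
      gcongr
      exact (Nat.ceil_lt_add_one (by positivity)).le
    _ = a / b * y + y := by ring
    _ ≤ a / b * (c * b) + a := by gcongr
    _ = (c + 1) * a := by field_simp

/-- Quantitative core of "Treewidth-Awareness of 𝓡'": there is `c > 0` such that
for all `ι ≥ 2` and `k` with `ι·log₂ ι ≤ k`, there is `m ≥ 1` with
`2^k ≤ (ι!)^m` and `m·ι ≤ c·k/log₂ ι`. -/
theorem exists_blocks_factorial_pow_ge_two_pow :
    ∃ c : ℝ, 0 < c ∧ ∀ ι k : ℕ, 2 ≤ ι → (ι : ℝ) * Real.logb 2 (ι : ℝ) ≤ (k : ℝ) →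
      ∃ m : ℕ, 1 ≤ m ∧ 2 ^ k ≤ (Nat.factorial ι) ^ m ∧
        ((m : ℝ) * (ι : ℝ)) ≤ c * (k : ℝ) / Real.logb 2 (ι : ℝ) := by
  refine ⟨2 + 1, by norm_num, fun ι k hι hk => ?_⟩
  have one_lt_factorial : (1 : ℝ) < ι.factorial := mod_cast Nat.one_lt_factorial.mpr hι
  have logb_factorial_pos : 0 < Real.logb 2 ι.factorial :=
    Real.logb_pos one_lt_two one_lt_factorial
  have logb_pos : 0 < Real.logb 2 ι := Real.logb_pos one_lt_two (mod_cast hι)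
  have k_pos : (0 : ℝ) < k := lt_of_lt_of_le (by positivity) hk
  refine ⟨⌈k / Real.logb 2 ι.factorial⌉₊, Nat.one_le_ceil_iff.mpr (by positivity), ?_, ?_⟩
  · exact_mod_cast pow_le_pow_ceil_div_logb one_lt_two one_lt_factorial k
  · rw [le_div_iff₀ logb_pos, mul_assoc]
    exact natCeil_div_mul_le_add_one_mul logb_factorial_pos (by positivity) hk
      (mul_logb_self_le_two_mul_logb_factorial one_lt_two ι)
end
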